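/- For every integer n ≥ 1, the following are pairwise equivalent over PA⁻ + IΣn: (1) PΣn; (2) for every partial Σn-definable function f and all elements a and b, there exists an approximation s to f of length b with s(0) ≥ a; (3) for every partial Σn-definable function f, every total Σn-definable function g, and every b, there exists a g-stretched approximation to f of length b. -/

import Mathlib

/- Shared development: first-order arithmetic in the language {0,1,+,·,<},
   the arithmetic hierarchy, fragments of arithmetic, and coded finite
   combinatorics inside models. -/

open FirstOrder Language

namespace ArithFC

/-- Function symbols of the language of arithmetic: 0, 1, +, ·. -/
inductive Func : ℕ → Type
  | zero : Func 0
  | one : Func 0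
  | add : Func 2
  | mul : Func 2

/-- Relation symbols of the language of arithmetic: <. -/
inductive Rel : ℕ → Type
  | lt : Rel 2

/-- The first-order language {0, 1, +, ·, <}. -/
def lang : Language :=
  { Functions := Func, Relations := Rel }

section Instances

variable (M : Type) [lang.Structure M]

instance : Zero M := ⟨Structure.funMap (L := lang) Func.zero ![]⟩
instance : One M := ⟨Structure.funMap (L := lang) Func.one ![]⟩
instance : Add M := ⟨fun x y => Structure.funMap (L := lang) Func.add ![x, y]⟩
instance : Mul M := ⟨fun x y => Structure.funMap (L := lang) Func.mul ![x, y]⟩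
instance : LT M := ⟨fun x y => Structure.RelMap (L := lang) Rel.lt ![x, y]⟩
instance : LE M := ⟨fun x y => x < y ∨ x = y⟩

end Instances

/-- The numeral `n` in a model. -/
def numM (M : Type) [lang.Structure M] : ℕ → M
  | 0 => 0
  | n + 1 => numM M n + 1

/-- `b` is nonstandard (greater than every numeral). -/
def Nonstd {M : Type} [lang.Structure M] (b : M) : Prop := ∀ n : ℕ, numM M n < b

/-- The atomic formula `t < u`. -/
def ltFm {α : Type} {n : ℕ} (t u : lang.Term (α ⊕ Fin n)) : lang.BoundedFormula α n :=
  BoundedFormula.rel (Rel.lt : lang.Relations 2) ![t, u]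

/-- Δ₀ formulas: built from atomic formulas by boolean connectives and
bounded universal quantification (this generates, up to logical equivalence,
the usual class of bounded formulas). -/
inductive IsDelta0 {α : Type} : ∀ n : ℕ, lang.BoundedFormula α n → Prop
  | falsum (n : ℕ) : IsDelta0 n BoundedFormula.falsum
  | equal (n : ℕ) (t u : lang.Term (α ⊕ Fin n)) : IsDelta0 n (BoundedFormula.equal t u)
  | rel (n l : ℕ) (R : lang.Relations l) (ts : Fin l → lang.Term (α ⊕ Fin n)) :
      IsDelta0 n (BoundedFormula.rel R ts)
  | imp (n : ℕ) {φ ψ : lang.BoundedFormula α n} :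
      IsDelta0 n φ → IsDelta0 n ψ → IsDelta0 n (φ.imp ψ)
  | bdAll (n : ℕ) (t : lang.Term (α ⊕ Fin n)) {φ : lang.BoundedFormula α (n + 1)} :
      IsDelta0 (n + 1) φ →
      IsDelta0 n
        (BoundedFormula.all ((ltFm (Term.var (Sum.inr (Fin.last n))) (t.liftAt 1 n)).imp φ))

mutual
  /-- Σ_m formulas. -/
  inductive SigmaFm {α : Type} : ℕ → ∀ n : ℕ, lang.BoundedFormula α n → Prop
    | delta0 (m n : ℕ) {φ : lang.BoundedFormula α n} : IsDelta0 n φ → SigmaFm m n φ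
    | ofPi (m n : ℕ) {φ : lang.BoundedFormula α n} : PiFm m n φ → SigmaFm (m + 1) n φ
    | ex (m n : ℕ) {φ : lang.BoundedFormula α (n + 1)} :
        SigmaFm (m + 1) (n + 1) φ → SigmaFm (m + 1) n φ.ex
  /-- Π_m formulas. -/
  inductive PiFm {α : Type} : ℕ → ∀ n : ℕ, lang.BoundedFormula α n → Prop
    | delta0 (m n : ℕ) {φ : lang.BoundedFormula α n} : IsDelta0 n φ → PiFm m n φ
    | ofSigma (m n : ℕ) {φ : lang.BoundedFormula α n} : SigmaFm m n φ → PiFm (m + 1) n φ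
    | all (m n : ℕ) {φ : lang.BoundedFormula α (n + 1)} :
        PiFm (m + 1) (n + 1) φ → PiFm (m + 1) n φ.all
end

/-- A `k`-ary relation on `M` is Σ_m-definable (with parameters from `M`). -/
def IsSigmaDef (m : ℕ) (M : Type) [lang.Structure M] {k : ℕ} (R : (Fin k → M) → Prop) : Prop :=
  ∃ (p : ℕ) (φ : lang.BoundedFormula (Fin k ⊕ Fin p) 0) (w : Fin p → M),
    SigmaFm m 0 φ ∧ ∀ v : Fin k → M, R v ↔ φ.Realize (Sum.elim v w) finZeroElim

/-- A subset of `M` is Σ_m-definable with parameters. -/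
def SigmaDef1 (m : ℕ) (M : Type) [lang.Structure M] (A : Set M) : Prop :=
  IsSigmaDef m M (k := 1) fun v => v 0 ∈ A

/-- A binary relation on `M` is Σ_m-definable with parameters. -/
def SigmaDef2 (m : ℕ) (M : Type) [lang.Structure M] (R : M → M → Prop) : Prop :=
  IsSigmaDef m M (k := 2) fun v => R (v 0) (v 1)

/-- A ternary relation on `M` is Σ_m-definable with parameters. -/
def SigmaDef3 (m : ℕ) (M : Type) [lang.Structure M] (R : M → M → M → Prop) : Prop :=
  IsSigmaDef m M (k := 3) fun v => R (v 0) (v 1) (v 2)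

/-- `M` is a model of PA⁻ (the nonnegative part of a discretely ordered
commutative semiring). -/
structure PAm (M : Type) [lang.Structure M] : Prop where
  add_assoc : ∀ x y z : M, x + y + z = x + (y + z)
  add_comm : ∀ x y : M, x + y = y + x
  mul_assoc : ∀ x y z : M, x * y * z = x * (y * z)
  mul_comm : ∀ x y : M, x * y = y * x
  ldistrib : ∀ x y z : M, x * (y + z) = x * y + x * z
  add_zero : ∀ x : M, x + 0 = x
  mul_zero : ∀ x : M, x * 0 = 0
  mul_one : ∀ x : M, x * 1 = x
  lt_trans : ∀ x y z : M, x < y → y < z → x < z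
  lt_irrefl : ∀ x : M, ¬x < x
  lt_total : ∀ x y : M, x < y ∨ x = y ∨ y < x
  add_lt_add : ∀ x y z : M, x < y → x + z < y + z
  mul_lt_mul : ∀ x y z : M, x < y → 0 < z → x * z < y * z
  sub_exists : ∀ x y : M, x < y → ∃ z, x + z = y
  zero_lt_one : (0 : M) < 1
  discrete : ∀ x : M, 0 < x → (1 : M) ≤ x
  zero_le : ∀ x : M, (0 : M) ≤ x

/-- `M` satisfies the Σ_m-induction scheme (with parameters). -/
def ISig (m : ℕ) (M : Type) [lang.Structure M] : Prop :=
  ∀ A : Set M, SigmaDef1 m M A → (0 : M) ∈ A → (∀ x, x ∈ A → x + 1 ∈ A) → ∀ x, x ∈ A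

/-- `M` satisfies the Σ_m-collection (bounding) scheme (with parameters). -/
def BSig (m : ℕ) (M : Type) [lang.Structure M] : Prop :=
  ∀ R : M → M → Prop, SigmaDef2 m M R → ∀ a : M,
    (∀ x, x < a → ∃ y, R x y) → ∃ b, ∀ x, x < a → ∃ y, y < b ∧ R x y

section Coding

variable {M : Type} [lang.Structure M]

/-- `z` is the Cantor pair `⟨x, y⟩`: `2z = (x+y)(x+y+1) + 2y`. -/
def IsPairC (z x y : M) : Prop := z + z = (x + y) * (x + y + 1) + (y + y)

/-- Gödel's β-function: `x = a mod ((i+1)·b + 1)`. -/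
def BetaC (a b i x : M) : Prop :=
  x < (i + 1) * b + 1 ∧ ∃ q, a = q * ((i + 1) * b + 1) + x

/-- The sequence coded by `s` (via a Cantor pair of β-function data) has value `x`
at place `i`. -/
def SeqAt (s i x : M) : Prop := ∃ a b, IsPairC s a b ∧ BetaC a b i x

/-- `c` codes the M-finite set `X` of cardinality `card`: `c = ⟨card, s⟩` where `s`
codes the strictly increasing enumeration of `X` of length `card`. -/
def CodesFinset (c : M) (X : Set M) (card : M) : Prop :=
  ∃ s, IsPairC c card s ∧
    (∀ i, i < card → ∃ x, x ∈ X ∧ SeqAt s i x) ∧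
    (∀ i j x y, i < j → j < card → SeqAt s i x → SeqAt s j y → x < y) ∧
    (∀ x, x ∈ X ↔ ∃ i, i < card ∧ SeqAt s i x)

/-- `X` is an M-finite (coded) set. -/
def MFinite (X : Set M) : Prop := ∃ c card : M, CodesFinset c X card

/-- `d` codes an `e`-element subset `D` of `[0, y)`, i.e. an element of `[y]^e`. -/
def CodesTupleIn (d e y : M) (D : Set M) : Prop :=
  CodesFinset d D e ∧ ∀ z ∈ D, z < y

/-- `f` codes a (finite) function defined on all of `[0, a)`. -/
def CodesFunOn (f a : M) : Prop :=
  ∀ x, x < a → (∃ y, SeqAt f x y) ∧ ∀ y y', SeqAt f x y → SeqAt f x y' → y = y'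

/-- `X` is an M-coded subset of `[0, a)`. -/
def MCodedSubset (a : M) (X : Set M) : Prop :=
  MFinite X ∧ ∀ x ∈ X, x < a

end Coding

/-- An `M`-ultrafilter on `a`: an ultrafilter of the Boolean algebra of
M-finite subsets of `[0, a)`. -/
structure MUltra (M : Type) [lang.Structure M] (a : M) where
  sets : Set (Set M)
  mem_coded : ∀ X ∈ sets, MCodedSubset a X
  univ_mem : {x : M | x < a} ∈ sets
  superset_mem : ∀ X Y : Set M, X ∈ sets → MCodedSubset a Y → X ⊆ Y → Y ∈ sets
  inter_mem : ∀ X Y : Set M, X ∈ sets → Y ∈ sets → X ∩ Y ∈ sets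
  empty_not_mem : (∅ : Set M) ∉ sets
  ultra : ∀ X : Set M, MCodedSubset a X → X ∈ sets ∨ {x : M | x < a ∧ x ∉ X} ∈ sets

section Principles

variable (M : Type) [lang.Structure M]

/-- `F` is (the graph of) a Σ_m-definable injection from `[0, y)` into `[0, x)`. -/
def SigmaInjRel (m : ℕ) (F : M → M → Prop) (y x : M) : Prop :=
  SigmaDef2 m M F ∧
    (∀ u, u < y → ∃ v, v < x ∧ F u v) ∧
    (∀ u v v', u < y → F u v → F u v' → v = v') ∧
    (∀ u u' v, u < y → u' < y → F u v → F u' v → u = u')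

/-- There exists a Σ_m-definable injection from `[0, y)` into `[0, x)`. -/
def ExSigmaInj (m : ℕ) (y x : M) : Prop := ∃ F : M → M → Prop, SigmaInjRel M m F y x

/-- There exists a Σ_m-definable injection from all of `M` into `[0, a)`. -/
def SigmaInjWhole (m : ℕ) (a : M) : Prop :=
  ∃ F : M → M → Prop, SigmaDef2 m M F ∧
    (∀ u, ∃ v, v < a ∧ F u v) ∧
    (∀ u v v', F u v → F u v' → v = v') ∧
    (∀ u u' v, F u v → F u' v → u = u')

/-- CARD(Σ_m): no Σ_m-definable multivalued map sends `M` injectively below `a`. -/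
def CARD (m : ℕ) : Prop :=
  ∀ F : M → M → Prop, SigmaDef2 m M F → ∀ a : M,
    (∀ x, ∃ y, y < a ∧ F x y) →
      ∃ x0 x1 y, x0 ≠ x1 ∧ y < a ∧ F x0 y ∧ F x1 y

/-- GPHP(Σ_m): for every `x` there is `y` with no Σ_m-definable injection of
`[0,y)` into `[0,x)`. -/
def GPHP (m : ℕ) : Prop := ∀ x : M, ∃ y : M, ¬ExSigmaInj M m y x

/-- WPHP(Σ_m): for `x > 0` there is no Σ_m-definable injection of `[0,2x)` into `[0,x)`. -/
def WPHP (m : ℕ) : Prop := ∀ x : M, 0 < x → ¬ExSigmaInj M m (x + x) x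

/-- `C` is a Σ_m-definable `k`-coloring of `[y]^e` (acting on codes of
`e`-element subsets of `[0,y)`, independently of the chosen code). -/
def IsColoring (m : ℕ) (e y k : M) (C : M → M → Prop) : Prop :=
  SigmaDef2 m M C ∧
    (∀ d D, CodesTupleIn d e y D → ∃ i, i < k ∧ C d i) ∧
    (∀ d d' D i i', CodesTupleIn d e y D → CodesTupleIn d' e y D → C d i → C d' i' → i = i')

/-- FRT^e_k(Σ_m): every Σ_m-definable `k`-coloring of some `[y]^e` has an
M-finite homogeneous set of cardinality `x`, for every `x`. -/
def FRT (m : ℕ) (e k : M) : Prop :=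
  ∀ x : M, ∃ y : M, ∀ C : M → M → Prop, IsColoring M m e y k C →
    ∃ (c : M) (H : Set M), CodesFinset c H x ∧ (∀ z ∈ H, z < y) ∧
      ∃ i, ∀ d D, CodesFinset d D e → D ⊆ H → C d i

/-- fairFRT^e_k(Σ_m): the homogeneous set is required to be given as the range of a
Σ_m-definable injection from `[0,x)` into `[0,y)`. -/
def FairFRT (m : ℕ) (e k : M) : Prop :=
  ∀ x : M, ∃ y : M, ∀ C : M → M → Prop, IsColoring M m e y k C →
    ∃ H : M → M → Prop, SigmaInjRel M m H x y ∧
      ∃ i, ∀ d D, CodesFinset d D e → (∀ z ∈ D, ∃ u, u < x ∧ H u z) → C d i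

/-- `C` is a Σ_m-definable `k`-coloring of `[0, y)`. -/
def IsColoring1 (m : ℕ) (y k : M) (C : M → M → Prop) : Prop :=
  SigmaDef2 m M C ∧
    (∀ z, z < y → ∃ i, i < k ∧ C z i) ∧
    (∀ z i i', z < y → C z i → C z i' → i = i')

/-- FRT¹_k(Σ_m): every Σ_m-definable `k`-coloring of some `[0,y)` has an M-finite
homogeneous set of cardinality `x`, for every `x`. -/
def FRT1 (m : ℕ) (k : M) : Prop :=
  ∀ x : M, ∃ y : M, ∀ C : M → M → Prop, IsColoring1 M m y k C →
    ∃ (c : M) (H : Set M), CodesFinset c H x ∧ (∀ z ∈ H, z < y) ∧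
      ∃ i, ∀ z ∈ H, C z i

/-- fairFRT¹_k(Σ_m). -/
def FairFRT1 (m : ℕ) (k : M) : Prop :=
  ∀ x : M, ∃ y : M, ∀ C : M → M → Prop, IsColoring1 M m y k C →
    ∃ H : M → M → Prop, SigmaInjRel M m H x y ∧
      ∃ i, ∀ u v, u < x → H u v → C v i

end Principles

section Approx

variable {M : Type} [lang.Structure M]

/-- `f` is (the graph of) a partial function. -/
def IsPartialFun (f : M → M → Prop) : Prop := ∀ x y y', f x y → f x y' → y = y'

/-- `s` codes an approximation to the partial function `f` of length `b`. -/
def IsApprox (f : M → M → Prop) (s b : M) : Prop :=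
  (∀ i, i < b → ∃ v, SeqAt s i v) ∧
    (∀ i u v x y, i + 1 < b → SeqAt s i u → SeqAt s (i + 1) v → x ≤ u → f x y → y ≤ v)

/-- `s` codes a `g`-stretched approximation to the partial function `f` of length `b`. -/
def IsStretchedApprox (f g : M → M → Prop) (s b : M) : Prop :=
  (∀ i, i < b → ∃ v, SeqAt s i v) ∧
    (∀ i u w v x y, i + 1 < b → SeqAt s i u → g u w → SeqAt s (i + 1) v →
      x ≤ w → f x y → y ≤ v)

/-- The eventual (limit) value of `fun s => h s ·` is `x`. -/
def EvLim (h : M → M → Prop) (x : M) : Prop := ∃ s : M, ∀ t, s < t → h t x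

end Approx

/-- PΣ_m: every partial Σ_m-definable function admits approximations of every length. -/
def PSig (m : ℕ) (M : Type) [lang.Structure M] : Prop :=
  ∀ f : M → M → Prop, SigmaDef2 m M f → IsPartialFun f → ∀ b : M, ∃ s, IsApprox f s b

section Extensions

variable (M N : Type) [lang.Structure M] [lang.Structure N]

/-- `g : M → N` is Σ_m-elementary: Σ_m formulas with parameters from `M` transfer. -/
def SigmaElem (m : ℕ) (g : M → N) : Prop :=
  ∀ (p : ℕ) (φ : lang.BoundedFormula (Fin p) 0), SigmaFm m 0 φ →
    ∀ v : Fin p → M, (φ.Realize v finZeroElim ↔ φ.Realize (g ∘ v) finZeroElim)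

/-- The extension `g : M → N` is cofinal. -/
def Cofinal (g : M → N) : Prop := ∀ z : N, ∃ x : M, z ≤ g x

/-- `[0,a]^M = [0,a]^N`: every element of `N` below `g a` comes from `M`. -/
def SameBelow (g : M → N) (a : M) : Prop := ∀ z : N, z ≤ g a → ∃ x : M, g x = z

end Extensions

section Ramsey

variable {M : Type} [lang.Structure M]

/-- `f` is an M-coded `k`-coloring of `[y]^e` (assigning colors to codes of
`e`-subsets of `[0,y)`, independently of the code). -/
def CodedColoring (f e y k : M) : Prop :=
  (∀ d D, CodesTupleIn d e y D → ∃ i, i < k ∧ SeqAt f d i) ∧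
    (∀ d d' D i i', CodesTupleIn d e y D → CodesTupleIn d' e y D →
      SeqAt f d i → SeqAt f d' i' → i = i')

/-- The coded coloring `f` of `[y]^e` has an M-coded homogeneous set of cardinality `x`. -/
def CodedHomog (f e y x : M) : Prop :=
  ∃ (c : M) (H : Set M), CodesFinset c H x ∧ (∀ z ∈ H, z < y) ∧
    ∃ i, ∀ d D, CodesFinset d D e → D ⊆ H → SeqAt f d i

/-- `y = r(x, e, k)`: `y` is the least size guaranteeing coded homogeneous sets of
cardinality `x` for all coded `k`-colorings of `e`-subsets. -/
def IsRamsey (x e k y : M) : Prop :=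
  (∀ f, CodedColoring f e y k → CodedHomog f e y x) ∧
    (∀ y', y' < y → ∃ f, CodedColoring f e y' k ∧ ¬CodedHomog f e y' x)

/-- `y = r^(b)(x, e, k)`: the `b`-th iterate of the Ramsey function inside `M`. -/
def IterRamsey (x e k b y : M) : Prop :=
  ∃ s : M, SeqAt s 0 x ∧ SeqAt s b y ∧ (∀ i, i ≤ b → ∃ u, SeqAt s i u) ∧
    (∀ i u v, i < b → SeqAt s i u → SeqAt s (i + 1) v → IsRamsey u e k v)

end Ramsey

end ArithFC

/-!
Let `f` and `g` be partial Σₙ functions and `a` an element. Interleave them into one partial Σₙ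
function `F` in which the residue of an argument modulo 3 says what is asked: at `3x + 1` it
returns `f x`; at `3x + 2` it returns `3w + 1` with `w = g x`, which is the request for `f w`;
and a multiple of 3 is sent far above itself and `a`. In an approximation to `F`, the step after
an entry `u` leads to at least `3u + 2`, the next one to at least `3 (g u) + 1`, and the third
one to at least `f x` for all `x ≤ g u`. Every third entry of the approximation is therefore a
`g`-stretched approximation to `f`, and its first entry is at least `a`.

Every third entry of a sequence coded by Gödel's β-function with data `(A, B)` is the sequence
coded with data `(A, 3B)`, and `F` is analysed without induction, so that PA⁻ suffices
throughout.
-/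

namespace ArithFC

section Renaming

variable {L : FirstOrder.Language} {M α β : Type*} {n k : ℕ}

theorem elim_snoc_comp_castSucc (v : β → M) (x : Fin k → M) (y : M) :
    Sum.elim v (Fin.snoc x y : Fin (k + 1) → M) ∘ Sum.map id Fin.castSucc = Sum.elim v x := by
  rw [Sum.elim_comp_map, Function.comp_id, Fin.snoc_comp_castSucc]

/-- The extension of a renaming of variables under a quantifier: it sends the newly bound variable
to the newly bound variable. -/
def liftRenaming (r : α ⊕ Fin n → β ⊕ Fin k) : α ⊕ Fin (n + 1) → β ⊕ Fin (k + 1) :=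
  Sum.elim (Sum.map id Fin.castSucc ∘ r ∘ Sum.inl)
    (Fin.snoc (Sum.map id Fin.castSucc ∘ r ∘ Sum.inr) (Sum.inr (Fin.last k)))

theorem elim_snoc_comp_liftRenaming_inl (r : α ⊕ Fin n → β ⊕ Fin k) (v : β → M) (x : Fin k → M)
    (y : M) :
    Sum.elim v (Fin.snoc x y : Fin (k + 1) → M) ∘ liftRenaming r ∘ Sum.inl =
      Sum.elim v x ∘ r ∘ Sum.inl := by
  rw [← elim_snoc_comp_castSucc v x y]
  rfl

theorem elim_snoc_comp_liftRenaming_inr (r : α ⊕ Fin n → β ⊕ Fin k) (v : β → M) (x : Fin k → M)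
    (y : M) :
    Sum.elim v (Fin.snoc x y : Fin (k + 1) → M) ∘ liftRenaming r ∘ Sum.inr =
      Fin.snoc (Sum.elim v x ∘ r ∘ Sum.inr) y := by
  rw [liftRenaming, Sum.elim_comp_inr, Fin.comp_snoc, ← elim_snoc_comp_castSucc v x y]
  simp only [Sum.elim_inr, Fin.snoc_last]
  rfl

section

variable [L.Structure M]

theorem realize_term_liftAt_snoc (t : L.Term (α ⊕ Fin n)) (v : α → M) (x : Fin n → M) (y : M) :
    (t.liftAt 1 n).realize (Sum.elim v (Fin.snoc x y : Fin (n + 1) → M)) =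
      t.realize (Sum.elim v x) := by
  rw [Term.realize_liftAt]
  congr 1
  ext (a | i)
  · rfl
  · simp only [Function.comp, Sum.map_inr, Sum.elim_inr, i.2, if_true]
    exact Fin.snoc_castSucc (α := fun _ => M) y x i

theorem realize_congr_of_eqOn_freeVarFinset [DecidableEq α] {φ : L.BoundedFormula α n}
    {v w : α → M} (h : Set.EqOn v w φ.freeVarFinset) (x : Fin n → M) :
    φ.Realize v x ↔ φ.Realize w x :=
  (BoundedFormula.realize_restrictFreeVar (f := Subtype.val) v fun _ => rfl).symm.trans
    (BoundedFormula.realize_restrictFreeVar w fun a => h a.2)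

end

end Renaming

section Formulas

variable {M α β : Type} [lang.Structure M] {n k : ℕ}

theorem realize_ltFm (t u : lang.Term (α ⊕ Fin n)) (v : α → M) (x : Fin n → M) :
    (ltFm t u).Realize v x ↔ t.realize (Sum.elim v x) < u.realize (Sum.elim v x) := by
  change Structure.RelMap _ _ ↔ Structure.RelMap _ _
  refine iff_of_eq (congrArg _ (funext fun i => ?_))
  fin_cases i <;> rfl

theorem realize_bdAll (t : lang.Term (α ⊕ Fin n)) (φ : lang.BoundedFormula α (n + 1))
    (v : α → M) (x : Fin n → M) :
    (BoundedFormula.all ((ltFm (Term.var (Sum.inr (Fin.last n))) (t.liftAt 1 n)).imp φ)).Realize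
        v x ↔
      ∀ y, y < t.realize (Sum.elim v x) → φ.Realize v (Fin.snoc x y) := by
  simp only [BoundedFormula.realize_all, BoundedFormula.realize_imp, realize_ltFm,
    realize_term_liftAt_snoc, Term.realize_var, Sum.elim_inr, Fin.snoc_last]

theorem IsDelta0.exists_renaming {φ : lang.BoundedFormula α n} (hφ : IsDelta0 n φ)
    (r : α ⊕ Fin n → β ⊕ Fin k) :
    ∃ ψ : lang.BoundedFormula β k, IsDelta0 k ψ ∧ ∀ (v : β → M) (x : Fin k → M), ψ.Realize v x ↔
      φ.Realize (Sum.elim v x ∘ r ∘ Sum.inl) (Sum.elim v x ∘ r ∘ Sum.inr) := by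
  have realize_rename (n k : ℕ) (r : α ⊕ Fin n → β ⊕ Fin k) (t : lang.Term (α ⊕ Fin n))
      (v : β → M) (x : Fin k → M) : (t.relabel r).realize (Sum.elim v x) =
        t.realize (Sum.elim (Sum.elim v x ∘ r ∘ Sum.inl) (Sum.elim v x ∘ r ∘ Sum.inr)) := by
    rw [Term.realize_relabel, ← Function.comp_assoc, ← Function.comp_assoc,
      Sum.elim_comp_inl_inr]
  induction hφ generalizing k with
  | falsum n => exact ⟨_, .falsum k, fun _ _ => Iff.rfl⟩
  | equal n t u =>
    refine ⟨_, .equal k (t.relabel r) (u.relabel r), fun v x => ?_⟩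
    simp only [BoundedFormula.Realize, realize_rename]
  | rel n l R ts =>
    refine ⟨_, .rel k l R fun i => (ts i).relabel r, fun v x => ?_⟩
    simp only [BoundedFormula.Realize, realize_rename]
  | imp n _ _ ih₁ ih₂ =>
    obtain ⟨ψ₁, hψ₁, h₁⟩ := ih₁ r
    obtain ⟨ψ₂, hψ₂, h₂⟩ := ih₂ r
    exact ⟨_, .imp k hψ₁ hψ₂, fun v x => imp_congr (h₁ v x) (h₂ v x)⟩
  | bdAll n t _ ih =>
    obtain ⟨ψ, hψ, h⟩ := ih (liftRenaming r)
    refine ⟨_, .bdAll k (t.relabel r) hψ, fun v x => ?_⟩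
    simp only [realize_bdAll, h, elim_snoc_comp_liftRenaming_inl, elim_snoc_comp_liftRenaming_inr,
      realize_rename]

mutual

theorem SigmaFm.exists_piFm_not_renaming : ∀ {m n k : ℕ} {φ : lang.BoundedFormula α n},
    SigmaFm m n φ → ∀ r : α ⊕ Fin n → β ⊕ Fin k,
    ∃ ψ : lang.BoundedFormula β k, PiFm m k ψ ∧ ∀ (v : β → M) (x : Fin k → M), ψ.Realize v x ↔
      ¬φ.Realize (Sum.elim v x ∘ r ∘ Sum.inl) (Sum.elim v x ∘ r ∘ Sum.inr)
  | _, _, k, _, .delta0 m _ hφ, r => by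
    obtain ⟨ψ, hψ, h⟩ := hφ.exists_renaming (M := M) r
    exact ⟨ψ.not, .delta0 m k (.imp k hψ (.falsum k)), fun v x => not_congr (h v x)⟩
  | _, _, k, _, .ofPi m _ hφ, r => by
    obtain ⟨ψ, hψ, h⟩ := hφ.exists_sigmaFm_not_renaming r
    exact ⟨ψ, .ofSigma m k hψ, h⟩
  | _, _, k, _, .ex m _ hφ, r => by
    obtain ⟨ψ, hψ, h⟩ := hφ.exists_piFm_not_renaming (liftRenaming r)
    refine ⟨ψ.all, .all m k hψ, fun v x => ?_⟩
    simp only [BoundedFormula.realize_all, BoundedFormula.realize_ex, h, not_exists,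
      elim_snoc_comp_liftRenaming_inl, elim_snoc_comp_liftRenaming_inr]

theorem PiFm.exists_sigmaFm_not_renaming : ∀ {m n k : ℕ} {φ : lang.BoundedFormula α n},
    PiFm m n φ → ∀ r : α ⊕ Fin n → β ⊕ Fin k,
    ∃ ψ : lang.BoundedFormula β k, SigmaFm m k ψ ∧ ∀ (v : β → M) (x : Fin k → M), ψ.Realize v x ↔
      ¬φ.Realize (Sum.elim v x ∘ r ∘ Sum.inl) (Sum.elim v x ∘ r ∘ Sum.inr)
  | _, _, k, _, .delta0 m _ hφ, r => by
    obtain ⟨ψ, hψ, h⟩ := hφ.exists_renaming (M := M) r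
    exact ⟨ψ.not, .delta0 m k (.imp k hψ (.falsum k)), fun v x => not_congr (h v x)⟩
  | _, _, k, _, .ofSigma m _ hφ, r => by
    obtain ⟨ψ, hψ, h⟩ := hφ.exists_piFm_not_renaming r
    exact ⟨ψ, .ofPi m k hψ, h⟩
  | _, _, k, _, .all m _ hφ, r => by
    obtain ⟨ψ, hψ, h⟩ := hφ.exists_sigmaFm_not_renaming (liftRenaming r)
    refine ⟨ψ.ex, .ex m k hψ, fun v x => ?_⟩
    simp only [BoundedFormula.realize_all, BoundedFormula.realize_ex, h, not_forall,
      elim_snoc_comp_liftRenaming_inl, elim_snoc_comp_liftRenaming_inr]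

end

theorem SigmaFm.exists_piFm_not {m : ℕ} {φ : lang.BoundedFormula α n} (hφ : SigmaFm m n φ) :
    ∃ ψ : lang.BoundedFormula α n, PiFm m n ψ ∧
      ∀ (v : α → M) (x : Fin n → M), ψ.Realize v x ↔ ¬φ.Realize v x :=
  hφ.exists_piFm_not_renaming id

theorem PiFm.exists_sigmaFm_not {m : ℕ} {φ : lang.BoundedFormula α n} (hφ : PiFm m n φ) :
    ∃ ψ : lang.BoundedFormula α n, SigmaFm m n ψ ∧
      ∀ (v : α → M) (x : Fin n → M), ψ.Realize v x ↔ ¬φ.Realize v x :=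
  hφ.exists_sigmaFm_not_renaming id

theorem SigmaFm.exists_renaming {m : ℕ} {φ : lang.BoundedFormula α n} (hφ : SigmaFm m n φ)
    (r : α ⊕ Fin n → β ⊕ Fin k) :
    ∃ ψ : lang.BoundedFormula β k, SigmaFm m k ψ ∧ ∀ (v : β → M) (x : Fin k → M), ψ.Realize v x ↔
      φ.Realize (Sum.elim v x ∘ r ∘ Sum.inl) (Sum.elim v x ∘ r ∘ Sum.inr) := by
  obtain ⟨χ, hχ, h₁⟩ := hφ.exists_piFm_not (M := M)
  obtain ⟨ψ, hψ, h₂⟩ := hχ.exists_sigmaFm_not_renaming (M := M) r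
  exact ⟨ψ, hψ, fun v x => by rw [h₂, h₁, not_not]⟩

theorem sigmaFm_zero_iff {φ : lang.BoundedFormula α n} : SigmaFm 0 n φ ↔ IsDelta0 n φ :=
  ⟨fun | .delta0 _ _ h => h, .delta0 0 n⟩

end Formulas

section Definability

variable {M : Type} [lang.Structure M] {m k l : ℕ}

-- A parameter is a free variable named by an element of `M` and interpreted by itself.
theorem isSigmaDef_iff {R : (Fin k → M) → Prop} :
    IsSigmaDef m M R ↔
      ∃ φ : lang.BoundedFormula M k, SigmaFm m k φ ∧ ∀ v, R v ↔ φ.Realize id v := by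
  constructor
  · rintro ⟨p, φ, w, hφ, hR⟩
    obtain ⟨ψ, hψ, h⟩ := hφ.exists_renaming (M := M) (β := M) (k := k)
      (Sum.elim (Sum.elim Sum.inr (Sum.inl ∘ w)) finZeroElim)
    refine ⟨ψ, hψ, fun v => ?_⟩
    rw [hR, h]
    refine iff_of_eq (congrArg₂ _ ?_ (Subsingleton.elim _ _))
    ext (i | j) <;> rfl
  · classical
    rintro ⟨φ, hφ, hR⟩
    let S := φ.freeVarFinset
    let w : Fin (S.card + 1) → M := Fin.cons 0 (fun i => S.equivFin.symm i)
    have mem_range (a : M) (ha : a ∈ S) : ∃ j, w j = a :=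
      ⟨(S.equivFin ⟨a, ha⟩).succ, by simp [w]⟩
    obtain ⟨ψ, hψ, h⟩ := hφ.exists_renaming (M := M) (β := Fin k ⊕ Fin (S.card + 1)) (k := 0)
      (Sum.inl ∘ Sum.elim (Sum.inr ∘ Function.invFun w) Sum.inl)
    refine ⟨S.card + 1, ψ, w, hψ, fun v => ?_⟩
    rw [hR, h]
    exact realize_congr_of_eqOn_freeVarFinset
      (fun a ha => (Function.invFun_eq (mem_range a ha)).symm) v

theorem isSigmaDef_zero_iff {R : (Fin k → M) → Prop} :
    IsSigmaDef 0 M R ↔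
      ∃ φ : lang.BoundedFormula M k, IsDelta0 k φ ∧ ∀ v, R v ↔ φ.Realize id v := by
  simp only [isSigmaDef_iff, sigmaFm_zero_iff]

theorem IsSigmaDef.comp {R : (Fin k → M) → Prop} (hR : IsSigmaDef m M R) (r : Fin k → Fin l) :
    IsSigmaDef m M fun v : Fin l → M => R (v ∘ r) := by
  obtain ⟨φ, hφ, hR⟩ := isSigmaDef_iff.mp hR
  obtain ⟨ψ, hψ, h⟩ := hφ.exists_renaming (M := M) (Sum.map id r)
  exact isSigmaDef_iff.mpr ⟨ψ, hψ, fun v => (hR _).trans (h id v).symm⟩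

theorem IsSigmaDef.of_zero {R : (Fin k → M) → Prop} (hR : IsSigmaDef 0 M R) : IsSigmaDef m M R := by
  obtain ⟨φ, hφ, h⟩ := isSigmaDef_zero_iff.mp hR
  exact isSigmaDef_iff.mpr ⟨φ, .delta0 m k hφ, h⟩

/-- `t` is the function of `k` variables given by a term with parameters from `M`. -/
def IsTermFun (t : (Fin k → M) → M) : Prop :=
  ∃ T : lang.Term (M ⊕ Fin k), ∀ v, T.realize (Sum.elim id v) = t v

theorem IsTermFun.var (i : Fin k) : IsTermFun fun v : Fin k → M => v i :=
  ⟨Term.var (Sum.inr i), fun _ => rfl⟩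

theorem IsTermFun.const (c : M) : IsTermFun fun _ : Fin k → M => c :=
  ⟨Term.var (Sum.inl c), fun _ => rfl⟩

theorem IsTermFun.add {s t : (Fin k → M) → M} (hs : IsTermFun s) (ht : IsTermFun t) :
    IsTermFun fun v => s v + t v := by
  obtain ⟨S, hS⟩ := hs
  obtain ⟨T, hT⟩ := ht
  refine ⟨Term.func (L := lang) Func.add ![S, T], fun v => ?_⟩
  beta_reduce
  rw [← hS, ← hT]
  change Structure.funMap _ _ = Structure.funMap _ _
  congr 1
  funext i
  fin_cases i <;> rfl

theorem IsTermFun.comp {t : (Fin k → M) → M} (ht : IsTermFun t) (r : Fin k → Fin l) :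
    IsTermFun fun v : Fin l → M => t (v ∘ r) := by
  obtain ⟨T, hT⟩ := ht
  refine ⟨T.relabel (Sum.map id r), fun v => ?_⟩
  rw [Term.realize_relabel, Sum.elim_comp_map, Function.comp_id, hT]

theorem IsTermFun.isSigmaDef_eq {s t : (Fin k → M) → M} (hs : IsTermFun s) (ht : IsTermFun t) :
    IsSigmaDef m M fun v => s v = t v := by
  obtain ⟨S, hS⟩ := hs
  obtain ⟨T, hT⟩ := ht
  refine (isSigmaDef_zero_iff.mpr ⟨_, .equal k S T, fun v => ?_⟩).of_zero
  rw [← hS, ← hT]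
  rfl

theorem IsSigmaDef.imp_zero {R S : (Fin k → M) → Prop} (hR : IsSigmaDef 0 M R)
    (hS : IsSigmaDef 0 M S) : IsSigmaDef 0 M fun v => R v → S v := by
  obtain ⟨φ, hφ, hR⟩ := isSigmaDef_zero_iff.mp hR
  obtain ⟨ψ, hψ, hS⟩ := isSigmaDef_zero_iff.mp hS
  exact isSigmaDef_zero_iff.mpr ⟨_, .imp k hφ hψ, fun v => imp_congr (hR v) (hS v)⟩

theorem IsSigmaDef.not_zero {R : (Fin k → M) → Prop} (hR : IsSigmaDef 0 M R) :
    IsSigmaDef 0 M fun v => ¬R v :=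
  hR.imp_zero (isSigmaDef_zero_iff.mpr ⟨_, .falsum k, fun _ => Iff.rfl⟩)

theorem IsSigmaDef.ball_zero {R : (Fin (k + 1) → M) → Prop} {t : (Fin k → M) → M}
    (hR : IsSigmaDef 0 M R) (ht : IsTermFun t) :
    IsSigmaDef 0 M fun v => ∀ y, y < t v → R (Fin.snoc v y) := by
  obtain ⟨φ, hφ, hR⟩ := isSigmaDef_zero_iff.mp hR
  obtain ⟨T, hT⟩ := ht
  refine isSigmaDef_zero_iff.mpr ⟨_, .bdAll k T hφ, fun v => ?_⟩
  simp only [realize_bdAll, hT, hR]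

theorem IsSigmaDef.not_succ {R : (Fin k → M) → Prop} (hR : IsSigmaDef m M R) :
    IsSigmaDef (m + 1) M fun v => ¬R v := by
  obtain ⟨φ, hφ, hR⟩ := isSigmaDef_iff.mp hR
  obtain ⟨ψ, hψ, h⟩ := hφ.exists_piFm_not (M := M)
  exact isSigmaDef_iff.mpr ⟨ψ, .ofPi m k hψ, fun v => by rw [hR, h]⟩

theorem IsSigmaDef.ex {R : (Fin (k + 1) → M) → Prop} (hR : IsSigmaDef (m + 1) M R) :
    IsSigmaDef (m + 1) M fun v => ∃ y, R (Fin.snoc v y) := by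
  obtain ⟨φ, hφ, hR⟩ := isSigmaDef_iff.mp hR
  refine isSigmaDef_iff.mpr ⟨φ.ex, .ex m k hφ, fun v => ?_⟩
  simp only [BoundedFormula.realize_ex, hR]

theorem SigmaFm.succ_induction {C : ∀ k : ℕ, ((Fin k → M) → Prop) → Prop}
    (not : ∀ {k} {R : (Fin k → M) → Prop}, IsSigmaDef m M R → C k fun v => ¬R v)
    (ex : ∀ {k} {R : (Fin (k + 1) → M) → Prop}, C (k + 1) R → C k fun v => ∃ y, R (Fin.snoc v y)) :
    ∀ {k} {φ : lang.BoundedFormula M k}, SigmaFm (m + 1) k φ → C k fun v => φ.Realize id v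
  | k, φ, .delta0 _ _ hφ => by
    have hR : IsSigmaDef 0 M fun v : Fin k → M => φ.Realize id v :=
      isSigmaDef_zero_iff.mpr ⟨φ, hφ, fun _ => Iff.rfl⟩
    simpa only [not_not] using not hR.not_zero.of_zero
  | _, _, .ofPi _ _ hφ => by
    obtain ⟨ψ, hψ, h⟩ := hφ.exists_sigmaFm_not (M := M)
    simpa only [h, not_not] using not (isSigmaDef_iff.mpr ⟨ψ, hψ, fun _ => Iff.rfl⟩)
  | _, _, .ex _ _ hφ => by
    simpa only [BoundedFormula.realize_ex] using ex (hφ.succ_induction not ex)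

theorem IsSigmaDef.succ_induction {C : ∀ k : ℕ, ((Fin k → M) → Prop) → Prop}
    (not : ∀ {k} {R : (Fin k → M) → Prop}, IsSigmaDef m M R → C k fun v => ¬R v)
    (ex : ∀ {k} {R : (Fin (k + 1) → M) → Prop}, C (k + 1) R → C k fun v => ∃ y, R (Fin.snoc v y))
    {R : (Fin k → M) → Prop} (hR : IsSigmaDef (m + 1) M R) : C k R := by
  obtain ⟨φ, hφ, hR⟩ := isSigmaDef_iff.mp hR
  simpa only [← hR] using hφ.succ_induction (C := C) not ex

theorem IsSigmaDef.op_succ {op : Prop → Prop → Prop} (op_comm : ∀ P Q, op P Q ↔ op Q P)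
    (exists_op : ∀ (P : M → Prop) (Q : Prop), op (∃ y, P y) Q ↔ ∃ y, op (P y) Q)
    (op_not_not : ∀ {k} {R S : (Fin k → M) → Prop}, IsSigmaDef m M R → IsSigmaDef m M S →
      IsSigmaDef (m + 1) M fun v => op (¬R v) (¬S v))
    {R S : (Fin k → M) → Prop} (hR : IsSigmaDef (m + 1) M R) (hS : IsSigmaDef (m + 1) M S) :
    IsSigmaDef (m + 1) M fun v => op (R v) (S v) := by
  have ex_op {k} {R : (Fin (k + 1) → M) → Prop} {S : (Fin k → M) → Prop}
      (h : IsSigmaDef (m + 1) M fun v => op (R v) (S (v ∘ Fin.castSucc))) :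
      IsSigmaDef (m + 1) M fun v => op (∃ y, R (Fin.snoc v y)) (S v) := by
    simpa only [exists_op, Fin.snoc_comp_castSucc] using h.ex
  have not_op {k} {R S : (Fin k → M) → Prop} (hR : IsSigmaDef m M R)
      (hS : IsSigmaDef (m + 1) M S) : IsSigmaDef (m + 1) M fun v => op (S v) (¬R v) := by
    refine succ_induction (C := fun k S => ∀ R : (Fin k → M) → Prop, IsSigmaDef m M R →
      IsSigmaDef (m + 1) M fun v => op (S v) (¬R v)) ?_ ?_ hS R hR
    · exact fun hS R hR => op_not_not hS hR
    · exact fun ih R hR => ex_op (ih _ (hR.comp Fin.castSucc))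
  refine succ_induction (C := fun k R => ∀ S : (Fin k → M) → Prop, IsSigmaDef (m + 1) M S →
    IsSigmaDef (m + 1) M fun v => op (R v) (S v)) ?_ ?_ hR S hS
  · exact fun hR S hS => by simpa only [op_comm] using not_op hR hS
  · exact fun ih S hS => ex_op (ih _ (hS.comp Fin.castSucc))

theorem IsSigmaDef.and_or {R S : (Fin k → M) → Prop} (hR : IsSigmaDef m M R)
    (hS : IsSigmaDef m M S) :
    IsSigmaDef m M (fun v => R v ∧ S v) ∧ IsSigmaDef m M (fun v => R v ∨ S v) := by
  induction m generalizing k with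
  | zero =>
    constructor
    · simpa only [Classical.not_imp, not_not] using (hR.imp_zero hS.not_zero).not_zero
    · simpa only [← or_iff_not_imp_left] using hR.not_zero.imp_zero hS
  | succ m ih =>
    constructor
    · refine op_succ (op := And) (fun _ _ => and_comm) (fun _ _ => exists_and_right.symm) ?_ hR hS
      exact fun hR hS => by simpa only [not_or] using (ih hR hS).2.not_succ
    · have exists_or_right (P : M → Prop) (Q : Prop) : (∃ y, P y) ∨ Q ↔ ∃ y, P y ∨ Q := by
        rw [exists_or, exists_const_iff, and_iff_right ⟨(0 : M)⟩]
      refine op_succ (op := Or) (fun _ _ => or_comm) exists_or_right ?_ hR hS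
      exact fun hR hS => by simpa only [not_and_or] using (ih hR hS).1.not_succ

theorem IsSigmaDef.and {R S : (Fin k → M) → Prop} (hR : IsSigmaDef m M R)
    (hS : IsSigmaDef m M S) : IsSigmaDef m M fun v => R v ∧ S v :=
  (hR.and_or hS).1

theorem IsSigmaDef.or {R S : (Fin k → M) → Prop} (hR : IsSigmaDef m M R)
    (hS : IsSigmaDef m M S) : IsSigmaDef m M fun v => R v ∨ S v :=
  (hR.and_or hS).2

theorem IsTermFun.isSigmaDef_lt {s t : (Fin k → M) → M} (hs : IsTermFun s) (ht : IsTermFun t) :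
    IsSigmaDef m M fun v => s v < t v := by
  obtain ⟨S, hS⟩ := hs
  obtain ⟨T, hT⟩ := ht
  refine (isSigmaDef_zero_iff.mpr ⟨ltFm S T, .rel _ _ _ _, fun v => ?_⟩).of_zero
  rw [realize_ltFm, hS, hT]

theorem IsSigmaDef.bex {R : (Fin (k + 1) → M) → Prop} {t : (Fin k → M) → M}
    (hR : IsSigmaDef m M R) (ht : IsTermFun t) :
    IsSigmaDef m M fun v => ∃ y, y < t v ∧ R (Fin.snoc v y) := by
  cases m with
  | zero => simpa only [not_forall, not_not, exists_prop] using (hR.not_zero.ball_zero ht).not_zero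
  | succ m =>
    have last_lt : IsSigmaDef (m + 1) M fun v : Fin (k + 1) → M =>
        v (Fin.last k) < t (v ∘ Fin.castSucc) :=
      (IsTermFun.var (Fin.last k)).isSigmaDef_lt (ht.comp Fin.castSucc)
    simpa only [Fin.snoc_last, Fin.snoc_comp_castSucc] using (last_lt.and hR).ex

end Definability

section Arithmetic

variable {M : Type} [lang.Structure M]

/-- A model of PA⁻ as a commutative semiring; scalar multiples and powers are the default ones. -/
abbrev PAm.commSemiring (h : PAm M) : CommSemiring M where
  add_assoc := h.add_assoc
  zero_add x := by rw [h.add_comm, h.add_zero]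
  add_zero := h.add_zero
  add_comm := h.add_comm
  nsmul := nsmulRec
  left_distrib := h.ldistrib
  right_distrib x y z := by rw [h.mul_comm, h.ldistrib, h.mul_comm z x, h.mul_comm z y]
  zero_mul x := by rw [h.mul_comm, h.mul_zero]
  mul_zero := h.mul_zero
  mul_assoc := h.mul_assoc
  one_mul x := by rw [h.mul_comm, h.mul_one]
  mul_one := h.mul_one
  mul_comm := h.mul_comm

/-- The linear order of a model of PA⁻. -/
noncomputable abbrev PAm.linearOrder (h : PAm M) : LinearOrder M where
  le_refl _ := Or.inr rfl
  le_trans := by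
    rintro x y z (hxy | rfl) (hyz | rfl)
    exacts [Or.inl (h.lt_trans _ _ _ hxy hyz), Or.inl hxy, Or.inl hyz, Or.inr rfl]
  le_antisymm := by
    rintro x y (hxy | rfl) (hyx | hyx)
    exacts [(h.lt_irrefl x (h.lt_trans _ _ _ hxy hyx)).elim, hyx.symm, rfl, rfl]
  lt_iff_le_not_ge x y := by
    refine ⟨fun hxy => ⟨Or.inl hxy, ?_⟩, ?_⟩
    · rintro (hyx | rfl)
      exacts [h.lt_irrefl x (h.lt_trans _ _ _ hxy hyx), h.lt_irrefl _ hxy]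
    · rintro ⟨hxy | rfl, hyx⟩
      exacts [hxy, (hyx (Or.inr rfl)).elim]
  le_total x y := by
    rcases h.lt_total x y with hxy | rfl | hyx
    exacts [Or.inl (Or.inl hxy), Or.inl (Or.inr rfl), Or.inr (Or.inl hyx)]
  toDecidableLE := Classical.decRel _

theorem PAm.isStrictOrderedRing (h : PAm M) :
    let _ := h.commSemiring
    let _ := h.linearOrder
    IsStrictOrderedRing M := by
  let := h.commSemiring
  let := h.linearOrder
  have : IsOrderedCancelAddMonoid M := .of_add_lt_add_left fun a b c hbc => by
    simpa only [h.add_comm a] using h.add_lt_add b c a hbc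
  have : Nontrivial M := ⟨0, 1, h.zero_lt_one.ne⟩
  exact { zero_le_one := h.zero_lt_one.le
          mul_lt_mul_of_pos_left := fun a ha b c hbc => by
            simpa only [h.mul_comm a] using h.mul_lt_mul b c a hbc ha
          mul_lt_mul_of_pos_right := fun a ha b c hbc => h.mul_lt_mul b c a hbc ha }

theorem PAm.lt_add_one (h : PAm M) (x : M) : x < x + 1 := by
  simpa only [h.add_comm, h.add_zero] using h.add_lt_add 0 1 x h.zero_lt_one

theorem PAm.zero_lt_two (h : PAm M) : (0 : M) < 1 + 1 :=
  h.lt_trans _ _ _ h.zero_lt_one (h.lt_add_one 1)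

theorem PAm.one_ne_two (h : PAm M) : (1 : M) ≠ 1 + 1 := by
  let := h.linearOrder
  exact (h.lt_add_one 1).ne

theorem PAm.add_one_le_of_lt (h : PAm M) {x y : M} (hxy : x < y) : x + 1 ≤ y := by
  let := h.commSemiring
  let := h.linearOrder
  have := h.isStrictOrderedRing
  obtain ⟨z, rfl⟩ := h.sub_exists x y hxy
  exact add_le_add_right (h.discrete z (pos_of_lt_add_right hxy)) x

theorem IsPairC.lt_of_add_lt (h : PAm M) {z x y z' x' y' : M} (hz : IsPairC z x y)
    (hz' : IsPairC z' x' y') (hlt : x + y < x' + y') : z < z' := by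
  let := h.commSemiring
  let := h.linearOrder
  have := h.isStrictOrderedRing
  have hle : x + y + 1 ≤ x' + y' := h.add_one_le_of_lt hlt
  have hxy : 0 ≤ x + y + 1 + 1 := h.zero_le _
  have hxy' : 0 ≤ x' + y' := h.zero_le _
  have hx : 0 < x + x + 1 + 1 := h.zero_le (x + x + 1) |>.trans_lt (h.lt_add_one _)
  have hy : 0 ≤ y' + y' := h.zero_le _
  have : z + z < z' + z' := by
    calc z + z = (x + y) * (x + y + 1) + (y + y) := hz
      _ < (x + y) * (x + y + 1) + (y + y) + (x + x + 1 + 1) := lt_add_of_pos_right _ hx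
      _ = (x + y + 1) * (x + y + 1 + 1) := by ring
      _ ≤ (x' + y') * (x' + y' + 1) := by gcongr
      _ ≤ (x' + y') * (x' + y' + 1) + (y' + y') := le_add_of_nonneg_right hy
      _ = z' + z' := hz'.symm
  grind

theorem IsPairC.inj (h : PAm M) {z x y x' y' : M} (hz : IsPairC z x y) (hz' : IsPairC z x' y') :
    x = x' ∧ y = y' := by
  let := h.commSemiring
  let := h.linearOrder
  have := h.isStrictOrderedRing
  have hsum : x + y = x' + y' := le_antisymm
    (le_of_not_gt fun hlt => h.lt_irrefl z (hz'.lt_of_add_lt h hz hlt))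
    (le_of_not_gt fun hlt => h.lt_irrefl z (hz.lt_of_add_lt h hz' hlt))
  unfold IsPairC at hz hz'
  grind

theorem PAm.mul_add_inj_of_lt (h : PAm M) {d q r q' r' : M} (hr : r < d) (hr' : r' < d)
    (heq : q * d + r = q' * d + r') : q = q' ∧ r = r' := by
  let := h.commSemiring
  let := h.linearOrder
  have := h.isStrictOrderedRing
  have le_of_eq {q r q' r' : M} (hr : r < d) (hr' : 0 ≤ r') (heq : q * d + r = q' * d + r') :
      q' ≤ q := by
    by_contra! hlt
    have hd : 0 ≤ d := h.zero_le d
    refine h.lt_irrefl (q * d + r) ?_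
    calc q * d + r < q * d + d := by gcongr
      _ = (q + 1) * d := by ring
      _ ≤ q' * d := by gcongr; exact h.add_one_le_of_lt hlt
      _ ≤ q' * d + r' := le_add_of_nonneg_right hr'
      _ = q * d + r := heq.symm
  have : q = q' :=
    le_antisymm (le_of_eq hr' (h.zero_le r) heq.symm) (le_of_eq hr (h.zero_le r') heq)
  grind

theorem IsPairC.seqAt_iff (h : PAm M) {s A B i v : M} (hs : IsPairC s A B) :
    SeqAt s i v ↔ BetaC A B i v := by
  refine ⟨fun ⟨A', B', hs', hv⟩ => ?_, fun hv => ⟨A, B, hs, hv⟩⟩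
  obtain ⟨rfl, rfl⟩ := hs.inj h hs'
  exact hv

-- The moduli of `⟨A, (2c + 1) * B⟩` form a subsequence of those of `⟨A, B⟩`. The rate is odd so
-- that the new pair has a code, which needs no parity argument in PA⁻.
theorem IsPairC.exists_seqAt_iff_seqAt_mul_add (h : PAm M) {s A B : M} (hs : IsPairC s A B)
    (c : M) :
    ∃ t, ∀ j w, SeqAt t j w ↔ SeqAt s (j * (c + c + 1) + (c + c)) w := by
  let := h.commSemiring
  let t := s + (c + c) * (A * B) + ((c * c + c) + (c * c + c)) * (B * B) + (c + c + c) * B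
  have ht : IsPairC t A ((c + c + 1) * B) := by
    unfold IsPairC at hs ⊢
    have hadd : t + t = (s + s) + (4 * c * A * B + (4 * c ^ 2 + 4 * c) * B ^ 2 + 6 * c * B) := by
      ring
    rw [hadd, hs]
    ring
  refine ⟨t, fun j w => ?_⟩
  have modulus : (j * (c + c + 1) + (c + c) + 1) * B + 1 = (j + 1) * ((c + c + 1) * B) + 1 := by
    ring
  rw [ht.seqAt_iff h, hs.seqAt_iff h, BetaC, BetaC, modulus]

end Arithmetic

theorem isPartialFun_eq {M : Type} : IsPartialFun (Eq : M → M → Prop) :=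
  fun _ _ _ hy hy' => hy.symm.trans hy'

section Interleaving

variable {M : Type} [lang.Structure M] {n : ℕ} {f g : M → M → Prop} {a : M}

/-- The graph of a function that calls `f` and `g` in turn. Arguments `3x + 1` and `3x + 2` are
requests for `f x` and `g x`; a value `w` of `g` is returned as the request `3w + 1` for `f w`. The
remaining arguments `u` are sent to `3(u + 2) + 2 + a`, which makes every approximation grow. The
bounds on the quantifiers are automatic and keep the definition within the same level of the
arithmetic hierarchy. -/
def interleave (f g : M → M → Prop) (a u y : M) : Prop :=
  (∃ x, x < u ∧ u = x + x + x + 1 ∧ f x y) ∨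
    (∃ x, x < u ∧ ∃ w, w < y ∧ u = x + x + x + (1 + 1) ∧ y = w + w + w + 1 ∧ g x w) ∨
    ((¬∃ x, x < u ∧ (u = x + x + x + 1 ∨ u = x + x + x + (1 + 1))) ∧
      y = (u + (1 + 1)) + (u + (1 + 1)) + (u + (1 + 1)) + (1 + 1) + a)

theorem SigmaDef2.interleave (hf : SigmaDef2 n M f) (hg : SigmaDef2 n M g) (a : M) :
    SigmaDef2 n M (interleave f g a) := by
  have triple {k} {t : (Fin k → M) → M} (ht : IsTermFun t) (c : M) :
      IsTermFun fun v => t v + t v + t v + c := ((ht.add ht).add ht).add (.const c)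
  have call_f : IsSigmaDef n M fun v : Fin 2 → M =>
      ∃ x, x < v 0 ∧ v 0 = x + x + x + 1 ∧ f x (v 1) :=
    ((IsTermFun.var 0).isSigmaDef_eq (triple (.var 2) 1)).and (hf.comp ![2, 1]) |>.bex (.var 0)
  have call_g : IsSigmaDef n M fun v : Fin 2 → M => ∃ x, x < v 0 ∧ ∃ w, w < v 1 ∧
      v 0 = x + x + x + (1 + 1) ∧ v 1 = w + w + w + 1 ∧ g x w :=
    ((IsTermFun.var 0).isSigmaDef_eq (triple (.var 2) (1 + 1))).and
      (((IsTermFun.var 1).isSigmaDef_eq (triple (.var 3) 1)).and (hg.comp ![2, 3]))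
      |>.bex (.var 1) |>.bex (.var 0)
  have tagged : IsSigmaDef 0 M fun v : Fin 2 → M =>
      ∃ x, x < v 0 ∧ (v 0 = x + x + x + 1 ∨ v 0 = x + x + x + (1 + 1)) :=
    ((IsTermFun.var 0).isSigmaDef_eq (triple (.var 2) 1)).or
      ((IsTermFun.var 0).isSigmaDef_eq (triple (.var 2) (1 + 1))) |>.bex (.var 0)
  have growth : IsSigmaDef n M fun v : Fin 2 → M =>
      v 1 = (v 0 + (1 + 1)) + (v 0 + (1 + 1)) + (v 0 + (1 + 1)) + (1 + 1) + a :=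
    (IsTermFun.var 1).isSigmaDef_eq
      ((triple ((IsTermFun.var 0).add (.const (1 + 1))) (1 + 1)).add (.const a))
  exact call_f.or (call_g.or (tagged.not_zero.of_zero.and growth))

theorem PAm.triple_add_inj (h : PAm M) {x y r r' : M} (hr : r ≤ 1 + 1) (hr' : r' ≤ 1 + 1)
    (heq : x + x + x + r = y + y + y + r') : x = y ∧ r = r' := by
  let := h.commSemiring
  let := h.linearOrder
  have mul_three (z : M) : z * (1 + 1 + 1) = z + z + z := by ring
  exact h.mul_add_inj_of_lt (hr.trans_lt (h.lt_add_one _)) (hr'.trans_lt (h.lt_add_one _))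
    (by rwa [mul_three, mul_three])

theorem PAm.lt_triple_add (h : PAm M) (x : M) {r : M} (hr : 0 < r) : x < x + x + x + r := by
  let := h.commSemiring
  let := h.linearOrder
  have := h.isStrictOrderedRing
  have hx := h.zero_le x
  exact ((le_add_of_nonneg_right hx).trans (le_add_of_nonneg_right hx)).trans_lt
    (lt_add_of_pos_right _ hr)

theorem interleave_triple_add_one (h : PAm M) {x y : M} :
    interleave f g a (x + x + x + 1) y ↔ f x y := by
  have hx := h.lt_triple_add x h.zero_lt_one
  refine ⟨?_, fun hf => .inl ⟨x, hx, rfl, hf⟩⟩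
  rintro (⟨x', -, hx', hf⟩ | ⟨x', -, w, -, hx', -⟩ | ⟨hu, -⟩)
  · obtain ⟨rfl, -⟩ := h.triple_add_inj (.inl (h.lt_add_one 1)) (.inl (h.lt_add_one 1)) hx'
    exact hf
  · exact (h.one_ne_two (h.triple_add_inj (.inl (h.lt_add_one 1)) (.inr rfl) hx').2).elim
  · exact (hu ⟨x, hx, .inl rfl⟩).elim

theorem interleave_triple_add_two (h : PAm M) {x y : M} :
    interleave f g a (x + x + x + (1 + 1)) y ↔ ∃ w, y = w + w + w + 1 ∧ g x w := by
  have hx := h.lt_triple_add x h.zero_lt_two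
  constructor
  · rintro (⟨x', -, hx', -⟩ | ⟨x', -, w, -, hx', hy, hg⟩ | ⟨hu, -⟩)
    · exact (h.one_ne_two.symm (h.triple_add_inj (.inr rfl) (.inl (h.lt_add_one 1)) hx').2).elim
    · obtain ⟨rfl, -⟩ := h.triple_add_inj (.inr rfl) (.inr rfl) hx'
      exact ⟨w, hy, hg⟩
    · exact (hu ⟨x, hx, .inr rfl⟩).elim
  · rintro ⟨w, rfl, hg⟩
    exact .inr (.inl ⟨x, hx, w, h.lt_triple_add w h.zero_lt_one, rfl, rfl, hg⟩)

theorem IsPartialFun.interleave (h : PAm M) (hf : IsPartialFun f) (hg : IsPartialFun g) :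
    IsPartialFun (interleave f g a) := by
  intro u y y' hy hy'
  by_cases hu : ∃ x, x < u ∧ (u = x + x + x + 1 ∨ u = x + x + x + (1 + 1))
  · obtain ⟨x, -, rfl | rfl⟩ := hu
    · rw [interleave_triple_add_one h] at hy hy'
      exact hf x y y' hy hy'
    · rw [interleave_triple_add_two h] at hy hy'
      obtain ⟨w, rfl, hw⟩ := hy
      obtain ⟨w', rfl, hw'⟩ := hy'
      rw [hg x w w' hw hw']
  · have value {z} (hz : ArithFC.interleave f g a u z) :
        z = (u + (1 + 1)) + (u + (1 + 1)) + (u + (1 + 1)) + (1 + 1) + a := by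
      rcases hz with ⟨x, hx, hux, -⟩ | ⟨x, hx, w, -, hux, -⟩ | ⟨-, hz⟩
      exacts [(hu ⟨x, hx, .inl hux⟩).elim, (hu ⟨x, hx, .inr hux⟩).elim, hz]
    rw [value hy, value hy']

theorem PAm.not_triple_eq_triple_add (h : PAm M) (x : M) : ¬∃ y, y < x + x + x ∧
    (x + x + x = y + y + y + 1 ∨ x + x + x = y + y + y + (1 + 1)) := by
  let := h.linearOrder
  rw [← h.add_zero (x + x + x)]
  rintro ⟨y, -, hy | hy⟩
  · exact h.zero_lt_one.ne (h.triple_add_inj (h.zero_le _) (.inl (h.lt_add_one 1)) hy).2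
  · exact h.zero_lt_two.ne (h.triple_add_inj (h.zero_le _) (.inr rfl) hy).2

theorem PAm.exists_le_interleave (h : PAm M) (u : M) :
    ∃ x, x ≤ u ∧ ∃ y, interleave f g a x y ∧ u + u + u + (1 + 1) + a ≤ y := by
  let := h.commSemiring
  let := h.linearOrder
  have := h.isStrictOrderedRing
  obtain ⟨x, r, rfl, hr, hx⟩ : ∃ x r, u = x + r ∧ r ≤ 1 + 1 ∧
      ¬∃ y, y < x ∧ (x = y + y + y + 1 ∨ x = y + y + y + (1 + 1)) := by
    by_cases hu : ∃ x, x < u ∧ (u = x + x + x + 1 ∨ u = x + x + x + (1 + 1))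
    · obtain ⟨x, -, hx | hx⟩ := hu
      exacts [⟨_, 1, hx, .inl (h.lt_add_one 1), h.not_triple_eq_triple_add x⟩,
        ⟨_, 1 + 1, hx, le_rfl, h.not_triple_eq_triple_add x⟩]
    · exact ⟨u, 0, (h.add_zero u).symm, h.zero_le _, hu⟩
  exact ⟨x, le_add_of_nonneg_right (h.zero_le r), _, .inr (.inr ⟨hx, rfl⟩), by gcongr⟩

theorem IsApprox.triple_add_le (h : PAm M) {s b j u v : M} (hs : IsApprox (interleave f g a) s b)
    (hj : j + 1 < b) (hu : SeqAt s j u) (hv : SeqAt s (j + 1) v) :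
    u + u + u + (1 + 1) + a ≤ v := by
  let := h.linearOrder
  obtain ⟨x, hxu, y, hxy, hy⟩ := h.exists_le_interleave (f := f) (g := g) (a := a) u
  exact hy.trans (hs.2 j u v x y hj hu hv hxu hxy)

theorem IsApprox.le_of_round (h : PAm M) {s b j u v w x y : M}
    (hs : IsApprox (interleave f g a) s b) (hj : j + 1 + 1 + 1 < b) (hu : SeqAt s j u)
    (hv : SeqAt s (j + 1 + 1 + 1) v) (hw : g u w) (hxw : x ≤ w) (hxy : f x y) : y ≤ v := by
  let := h.commSemiring
  let := h.linearOrder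
  have := h.isStrictOrderedRing
  have hj₂ : j + 1 + 1 < b := (h.lt_add_one _).trans hj
  have hj₁ : j + 1 < b := (h.lt_add_one _).trans hj₂
  obtain ⟨p, hp⟩ := hs.1 _ hj₁
  obtain ⟨q, hq⟩ := hs.1 _ hj₂
  have request_g : u + u + u + (1 + 1) ≤ p :=
    (le_add_of_nonneg_right (h.zero_le a)).trans (hs.triple_add_le h hj₁ hu hp)
  have request_f : w + w + w + 1 ≤ q :=
    hs.2 _ _ _ _ _ hj₂ hp hq request_g ((interleave_triple_add_two h).mpr ⟨w, rfl, hw⟩)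
  have request_f_x : x + x + x + 1 ≤ q := by
    refine le_trans ?_ request_f
    gcongr
  exact hs.2 _ _ _ _ _ hj hq hv request_f_x ((interleave_triple_add_one h).mpr hxy)

theorem PSig.exists_isStretchedApprox (h : PAm M) (hP : PSig n M) (hf : SigmaDef2 n M f)
    (hf' : IsPartialFun f) (hg : SigmaDef2 n M g) (hg' : IsPartialFun g) (a b : M) :
    ∃ t, IsStretchedApprox f g t b ∧ ∃ v, SeqAt t 0 v ∧ a ≤ v := by
  let := h.commSemiring
  let := h.linearOrder
  have := h.isStrictOrderedRing
  let index (i : M) : M := i * (1 + 1 + 1) + (1 + 1)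
  let length : M := b * (1 + 1 + 1) + (1 + 1 + 1)
  have index_succ (i : M) : index (i + 1) = index i + 1 + 1 + 1 := by ring
  have index_lt {i : M} (hi : i ≤ b) : index i < length := by
    have : (0 : M) ≤ 1 + 1 + 1 := h.zero_le _
    exact add_lt_add_of_le_of_lt (by gcongr) (h.lt_add_one _)
  have index_zero : index 0 = 1 + 1 := by simp only [index, zero_mul, zero_add]
  have two_lt : 1 + 1 < length := index_zero ▸ index_lt (h.zero_le b)
  obtain ⟨s, hs⟩ := hP _ (hf.interleave hg a) (hf'.interleave h hg') length
  obtain ⟨v₁, hv₁⟩ := hs.1 1 ((h.lt_add_one 1).trans two_lt)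
  obtain ⟨v₂, hv₂⟩ := hs.1 (1 + 1) two_lt
  obtain ⟨A, B, hsAB, -⟩ := id hv₁
  obtain ⟨t, ht : ∀ j w, SeqAt t j w ↔ SeqAt s (index j) w⟩ :=
    hsAB.exists_seqAt_iff_seqAt_mul_add h 1
  refine ⟨t, ⟨fun i hi => ?_, fun i u w v x y hi hu hw hv hxw hxy => ?_⟩, v₂, ?_, ?_⟩
  · simpa only [ht] using hs.1 _ (index_lt hi.le)
  · have hv : SeqAt s (index i + 1 + 1 + 1) v := index_succ i ▸ (ht _ _).mp hv
    exact hs.le_of_round h (index_succ i ▸ index_lt hi.le) ((ht _ _).mp hu) hv hw hxw hxy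
  · rwa [ht, index_zero]
  · refine le_trans ?_ (hs.triple_add_le h two_lt hv₁ hv₂)
    exact le_add_of_nonneg_left (h.zero_le _)

theorem sigmaDef2_eq : SigmaDef2 n M Eq :=
  (IsTermFun.var 0).isSigmaDef_eq (.var 1)

theorem isStretchedApprox_eq_iff {s b : M} : IsStretchedApprox f Eq s b ↔ IsApprox f s b := by
  refine and_congr_right fun _ => ⟨fun hs i u v x y hi hu hv => hs i u u v x y hi hu rfl hv, ?_⟩
  rintro hs i u _ v x y hi hu rfl hv
  exact hs i u v x y hi hu hv

end Interleaving

theorem statement_18_general (n : ℕ) (M : Type) [lang.Structure M] (hPA : PAm M) :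
    (PSig n M ↔
      ∀ f : M → M → Prop, SigmaDef2 n M f → IsPartialFun f →
        ∀ a b : M, ∃ s, IsApprox f s b ∧ ∃ v, SeqAt s 0 v ∧ a ≤ v) ∧
      ((∀ f : M → M → Prop, SigmaDef2 n M f → IsPartialFun f →
          ∀ a b : M, ∃ s, IsApprox f s b ∧ ∃ v, SeqAt s 0 v ∧ a ≤ v) ↔
        ∀ f g : M → M → Prop, SigmaDef2 n M f → IsPartialFun f →
          SigmaDef2 n M g → IsPartialFun g → (∀ x : M, ∃ y, g x y) →
          ∀ b : M, ∃ s, IsStretchedApprox f g s b) := by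
  have large_of_pSig (hP : PSig n M) (f : M → M → Prop) (hf : SigmaDef2 n M f)
      (hf' : IsPartialFun f) (a b : M) : ∃ s, IsApprox f s b ∧ ∃ v, SeqAt s 0 v ∧ a ≤ v := by
    simpa only [isStretchedApprox_eq_iff] using
      hP.exists_isStretchedApprox hPA hf hf' sigmaDef2_eq isPartialFun_eq a b
  have pSig_of_large (hL : ∀ f : M → M → Prop, SigmaDef2 n M f → IsPartialFun f →
      ∀ a b : M, ∃ s, IsApprox f s b ∧ ∃ v, SeqAt s 0 v ∧ a ≤ v) : PSig n M :=
    fun f hf hf' b => (hL f hf hf' 0 b).imp fun _ => And.left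
  refine ⟨⟨large_of_pSig, pSig_of_large⟩, fun hL f g hf hf' hg hg' _ b => ?_, fun hS => ?_⟩
  · exact ((pSig_of_large hL).exists_isStretchedApprox hPA hf hf' hg hg' 0 b).imp
      fun _ => And.left
  · refine large_of_pSig fun f hf hf' b => ?_
    obtain ⟨s, hs⟩ := hS f Eq hf hf' sigmaDef2_eq isPartialFun_eq (fun x => ⟨x, rfl⟩) b
    exact ⟨s, isStretchedApprox_eq_iff.mp hs⟩

/-- For every `n ≥ 1` the following are pairwise equivalent over
PA⁻ + IΣn: (1) PΣn; (2) approximations of any length with arbitrarily large first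
entry; (3) `g`-stretched approximations of any length, for total Σn-definable `g`. -/
theorem statement_18 (n : ℕ) (hn : 1 ≤ n) (M : Type) [lang.Structure M]
    (hPA : PAm M) (hI : ISig n M) :
    (PSig n M ↔
      ∀ f : M → M → Prop, SigmaDef2 n M f → IsPartialFun f →
        ∀ a b : M, ∃ s, IsApprox f s b ∧ ∃ v, SeqAt s 0 v ∧ a ≤ v) ∧
      ((∀ f : M → M → Prop, SigmaDef2 n M f → IsPartialFun f →
          ∀ a b : M, ∃ s, IsApprox f s b ∧ ∃ v, SeqAt s 0 v ∧ a ≤ v) ↔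
        ∀ f g : M → M → Prop, SigmaDef2 n M f → IsPartialFun f →
          SigmaDef2 n M g → IsPartialFun g → (∀ x : M, ∃ y, g x y) →
          ∀ b : M, ∃ s, IsStretchedApprox f g s b) :=
  statement_18_general n M hPA

end ArithFC
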